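/- Let F be a field of characteristic zero, A = F[x,y], n > 1. Consider the classical Poisson differentials D¹(f) = y^n(∂f/∂y, −∂f/∂x) and D²(f,g) = y^n(∂f/∂x + ∂g/∂y) − n·y^{n-1}·g, and the logarithmic differentials d¹(f) = (y^n·∂f/∂y, −y^{n-1}·∂f/∂x) and d²(a,b) = y^{n-1}(∂a/∂x + y·∂b/∂y) − (n−1)·y^{n-1}·b. Then the vertical maps ∂⁰ = id_A, ∂¹(f,g) = (f, g/y does not apply) — rather ∂¹(f¹, f²) = f¹·∂/∂x + f²·y·∂/∂y and the analogous identification of classical cochains — intertwine the two complexes, and in degree 2 the quotients agree: A/Im(D²) ≅ A/Im(d²) ≅ ⊕_{i=0}^{n-2} y^i F[x]; in particular the classical and logarithmic Poisson cohomologies of π = y^n ∂_x ∧ ∂_y are isomorphic in degree 2. -/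

import Mathlib

open MvPolynomial

noncomputable section

/-- The classical degree-2 Poisson differential `D²(f,g) = y^n(∂f/∂x + ∂g/∂y) − n·y^{n-1}·g`
of the bracket `{x,y} = y^n` (Roger–Vanhaecke). -/
def D2 (F : Type*) [Field F] (n : ℕ)
    (p : MvPolynomial (Fin 2) F × MvPolynomial (Fin 2) F) : MvPolynomial (Fin 2) F :=
  X 1 ^ n * (pderiv 0 p.1 + pderiv 1 p.2) - C (n : F) * X 1 ^ (n - 1) * p.2

/-- The logarithmic degree-2 differential `d²(a,b) = y^{n-1}(∂a/∂x + y·∂b/∂y) − (n−1)·y^{n-1}·b`. -/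
def d2 (F : Type*) [Field F] (n : ℕ)
    (p : MvPolynomial (Fin 2) F × MvPolynomial (Fin 2) F) : MvPolynomial (Fin 2) F :=
  X 1 ^ (n - 1) * (pderiv 0 p.1 + X 1 * pderiv 1 p.2) - C ((n : F) - 1) * X 1 ^ (n - 1) * p.2

/-!
Both differentials are multiples of `y^{n-1}`:
`D²(f,g) = y^{n-1}(y ∂_x f + (y ∂_y − n) g)` and `d²(a,b) = y^{n-1}(∂_x a + (y ∂_y − (n−1)) b)`.
The second factors run over all of `A`. For `d²` this is because `∂_x` is onto. For `D²`, the
operator `y ∂_y − n` multiplies the monomial `x^i y^j` by `j − n`, so it reaches every monomial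
with `j ≠ n`; those with `j = n` are divisible by `y` and reached by `y ∂_x`. Hence both images are
the ideal `(y^{n-1})`, and division by `y^{n-1}` gives the complement.
-/

section MonomialDivision

variable {R σ : Type*} [CommSemiring R]

theorem degreeOf_modMonomial_single_lt (i : σ) {k : ℕ} (hk : 0 < k) (f : MvPolynomial σ R) :
    degreeOf i (f.modMonomial (Finsupp.single i k)) < k := by
  rw [degreeOf_lt_iff hk]
  intro m hm
  contrapose! hm
  rw [notMem_support_iff]
  exact coeff_modMonomial_of_le f (Finsupp.single_le_iff.mpr hm)

theorem X_pow_mul_add_modMonomial_single {i : σ} {k : ℕ} {g : MvPolynomial σ R}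
    (hg : degreeOf i g < k) (h : MvPolynomial σ R) :
    (X i ^ k * h + g).modMonomial (Finsupp.single i k) = g := by
  ext m
  by_cases hm : Finsupp.single i k ≤ m
  · have hgm : coeff m g = 0 :=
      notMem_support_iff.mp
        (notMem_support_of_degreeOf_lt i (hg.trans_le (Finsupp.single_le_iff.mp hm)))
    rw [coeff_modMonomial_of_le _ hm, hgm]
  · rw [coeff_modMonomial_of_not_le _ hm, coeff_add, X_pow_eq_monomial, coeff_monomial_mul',
      if_neg hm, zero_add]

theorem existsUnique_degreeOf_lt_and_eq_add_of_mem_span_X_pow (i : σ) {k : ℕ} (hk : 0 < k)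
    (f : MvPolynomial σ R) :
    ∃! g : MvPolynomial σ R,
      degreeOf i g < k ∧ ∃ r ∈ Ideal.span {(X i : MvPolynomial σ R) ^ k}, f = r + g := by
  refine ⟨f.modMonomial (Finsupp.single i k),
    ⟨degreeOf_modMonomial_single_lt i hk f, X i ^ k * f.divMonomial (Finsupp.single i k),
      Ideal.mul_mem_right _ _ (Ideal.mem_span_singleton_self _), ?_⟩, ?_⟩
  · rw [X_pow_eq_monomial, divMonomial_add_modMonomial]
  · rintro g ⟨hg, r, hr, rfl⟩
    obtain ⟨h, rfl⟩ := Ideal.mem_span_singleton.mp hr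
    exact (X_pow_mul_add_modMonomial_single hg h).symm

end MonomialDivision

section PartialDerivatives

variable {R σ : Type*} [CommRing R]

theorem X_mul_pderiv_sub_C_mul_monomial (i : σ) (c : R) (m : σ →₀ ℕ) (a : R) :
    X i * pderiv i (monomial m a) - C c * monomial m a = monomial m ((m i - c) * a) := by
  rw [X_mul_pderiv_monomial, C_mul_monomial, ← map_nsmul, ← map_sub, nsmul_eq_mul, sub_mul]

variable [Algebra ℚ R]

theorem pderiv_surjective (i : σ) :
    Function.Surjective (pderiv i : MvPolynomial σ R → MvPolynomial σ R) := by
  intro h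
  induction h using MvPolynomial.induction_on' with
  | monomial m a =>
    refine ⟨monomial (m + Finsupp.single i 1) ((m i + 1 : ℚ)⁻¹ • a), ?_⟩
    have hmi : (m i + 1 : ℚ) ≠ 0 := Nat.cast_add_one_ne_zero _
    have hcoeff : (m i + 1 : ℚ)⁻¹ • a * ((m i + 1 : ℕ) : R) = a := by
      rw [mul_comm, ← nsmul_eq_mul, ← Nat.cast_smul_eq_nsmul ℚ, smul_smul, Nat.cast_add_one,
        mul_inv_cancel₀ hmi, one_smul]
    rw [pderiv_monomial, add_tsub_cancel_right, Finsupp.add_apply, Finsupp.single_eq_same, hcoeff]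
  | add p q hp hq =>
    obtain ⟨u, rfl⟩ := hp
    obtain ⟨v, rfl⟩ := hq
    exact ⟨u + v, map_add _ u v⟩

theorem exists_X_mul_pderiv_sub_eq_monomial {i : σ} {n : ℕ} {m : σ →₀ ℕ} (hm : m i ≠ n) (a : R) :
    ∃ g : MvPolynomial σ R, X i * pderiv i g - C (n : R) * g = monomial m a := by
  have hne : (m i - n : ℚ) ≠ 0 := sub_ne_zero.mpr (Nat.cast_injective.ne hm)
  have hcast : (m i - n : R) = algebraMap ℚ R (m i - n) := by
    simp only [map_sub, map_natCast]
  refine ⟨monomial m ((m i - n : ℚ)⁻¹ • a), ?_⟩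
  rw [X_mul_pderiv_sub_C_mul_monomial, hcast, ← Algebra.smul_def, smul_smul, mul_inv_cancel₀ hne,
    one_smul]

theorem exists_X_mul_pderiv_add_X_mul_pderiv_sub_eq (i j : σ) {n : ℕ} (hn : n ≠ 0)
    (h : MvPolynomial σ R) :
    ∃ f g : MvPolynomial σ R,
      X j * pderiv i f + (X j * pderiv j g - C (n : R) * g) = h := by
  induction h using MvPolynomial.induction_on' with
  | monomial m a =>
    rcases eq_or_ne (m j) n with hm | hm
    · obtain ⟨h, hh⟩ : X j ∣ monomial m a := X_dvd_monomial.mpr (.inr (hm ▸ hn))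
      obtain ⟨f, rfl⟩ := pderiv_surjective i h
      exact ⟨f, 0, by simp [hh]⟩
    · obtain ⟨g, hg⟩ := exists_X_mul_pderiv_sub_eq_monomial hm a
      exact ⟨0, g, by rw [map_zero, mul_zero, zero_add, hg]⟩
  | add p q hp hq =>
    obtain ⟨f₁, g₁, rfl⟩ := hp
    obtain ⟨f₂, g₂, rfl⟩ := hq
    refine ⟨f₁ + f₂, g₁ + g₂, ?_⟩
    simp only [map_add]
    ring

end PartialDerivatives

section Differentials

variable (R : Type*) [CommRing R]

/-- The degree-2 classical Poisson differential of `{x, y} = y^n` over a commutative ring, where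
`x = X 0`, `y = X 1`; over a field it is `D2`. -/
def classicalDifferential (n : ℕ) (p : MvPolynomial (Fin 2) R × MvPolynomial (Fin 2) R) :
    MvPolynomial (Fin 2) R :=
  X 1 ^ n * (pderiv 0 p.1 + pderiv 1 p.2) - C (n : R) * X 1 ^ (n - 1) * p.2

/-- The degree-2 logarithmic Poisson differential of `{x, y} = y^n` along `(y^n)` over a
commutative ring, where `(a, b)` stands for the logarithmic cochain with components `a` along
`∂_x` and `b` along `y ∂_y`; over a field it is `d2`. Since `n - 1` is truncated,
this is the differential only for `n ≠ 0`. -/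
def logDifferential (n : ℕ) (p : MvPolynomial (Fin 2) R × MvPolynomial (Fin 2) R) :
    MvPolynomial (Fin 2) R :=
  X 1 ^ (n - 1) * (pderiv 0 p.1 + X 1 * pderiv 1 p.2) - C ((n : R) - 1) * X 1 ^ (n - 1) * p.2

variable {R}

theorem classicalDifferential_eq_X_pow_mul {n : ℕ} (hn : n ≠ 0)
    (p : MvPolynomial (Fin 2) R × MvPolynomial (Fin 2) R) :
    classicalDifferential R n p =
      X 1 ^ (n - 1) * (X 1 * pderiv 0 p.1 + (X 1 * pderiv 1 p.2 - C (n : R) * p.2)) := by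
  rw [classicalDifferential, ← pow_sub_one_mul hn]
  ring

theorem logDifferential_eq_X_pow_mul (n : ℕ)
    (p : MvPolynomial (Fin 2) R × MvPolynomial (Fin 2) R) :
    logDifferential R n p =
      X 1 ^ (n - 1) * (pderiv 0 p.1 + (X 1 * pderiv 1 p.2 - C ((n : R) - 1) * p.2)) := by
  rw [logDifferential]
  ring

variable [Algebra ℚ R]

theorem range_classicalDifferential {n : ℕ} (hn : n ≠ 0) :
    Set.range (classicalDifferential R n) =
      Ideal.span {(X 1 : MvPolynomial (Fin 2) R) ^ (n - 1)} := by
  ext r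
  rw [SetLike.mem_coe, Ideal.mem_span_singleton]
  constructor
  · rintro ⟨p, rfl⟩
    exact ⟨_, classicalDifferential_eq_X_pow_mul hn p⟩
  · rintro ⟨h, rfl⟩
    obtain ⟨f, g, rfl⟩ := exists_X_mul_pderiv_add_X_mul_pderiv_sub_eq 0 1 hn h
    exact ⟨(f, g), classicalDifferential_eq_X_pow_mul hn (f, g)⟩

theorem range_logDifferential (n : ℕ) :
    Set.range (logDifferential R n) =
      Ideal.span {(X 1 : MvPolynomial (Fin 2) R) ^ (n - 1)} := by
  ext r
  rw [SetLike.mem_coe, Ideal.mem_span_singleton]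
  constructor
  · rintro ⟨p, rfl⟩
    exact ⟨_, logDifferential_eq_X_pow_mul n p⟩
  · rintro ⟨h, rfl⟩
    obtain ⟨f, rfl⟩ := pderiv_surjective 0 h
    exact ⟨(f, 0), by simp [logDifferential]⟩

end Differentials

theorem existsUnique_degreeOf_le_and_eq_apply_add {α R σ : Type*} [CommSemiring R] {i : σ}
    {n : ℕ} (hn : 1 < n) {D : α → MvPolynomial σ R}
    (hD : Set.range D = Ideal.span {(X i : MvPolynomial σ R) ^ (n - 1)}) (f : MvPolynomial σ R) :
    ∃! g : MvPolynomial σ R, degreeOf i g ≤ n - 2 ∧ ∃ p, f = D p + g := by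
  have hdeg (g : MvPolynomial σ R) : degreeOf i g ≤ n - 2 ↔ degreeOf i g < n - 1 := by omega
  have hrange (g : MvPolynomial σ R) :
      (∃ p, f = D p + g) ↔ ∃ r ∈ Ideal.span {(X i : MvPolynomial σ R) ^ (n - 1)}, f = r + g := by
    simp only [← SetLike.mem_coe, ← hD, Set.exists_range_iff]
  simp only [hdeg, hrange]
  exact existsUnique_degreeOf_lt_and_eq_add_of_mem_span_X_pow i (Nat.sub_pos_of_lt hn) f

theorem stmt19_general (R : Type*) [CommRing R] [Algebra ℚ R] (n : ℕ) (hn : 1 < n) :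
    (∀ f : MvPolynomial (Fin 2) R,
        ∃! g : MvPolynomial (Fin 2) R, degreeOf 1 g ≤ n - 2 ∧
          ∃ p : MvPolynomial (Fin 2) R × MvPolynomial (Fin 2) R,
            f = classicalDifferential R n p + g) ∧
    (∀ f : MvPolynomial (Fin 2) R,
        ∃! g : MvPolynomial (Fin 2) R, degreeOf 1 g ≤ n - 2 ∧
          ∃ p : MvPolynomial (Fin 2) R × MvPolynomial (Fin 2) R,
            f = logDifferential R n p + g) :=
  ⟨existsUnique_degreeOf_le_and_eq_apply_add hn (range_classicalDifferential (by omega)),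
    existsUnique_degreeOf_le_and_eq_apply_add hn (range_logDifferential n)⟩

/-- In degree 2 the classical and the logarithmic Poisson cohomology of
`π = y^n ∂_x ∧ ∂_y` agree: `Im(D²)` and `Im(d²)` have the same complement
`⊕_{i=0}^{n-2} y^i F[x]` in `A`, i.e. every `f ∈ A` is uniquely the sum of an element of
`Im(D²)` (resp. of `Im(d²)`) and a polynomial of `y`-degree at most `n−2`; hence
`A/Im(D²) ≅ ⊕_{i=0}^{n-2} y^i F[x] ≅ A/Im(d²)`. -/
theorem stmt19 (F : Type*) [Field F] [CharZero F] (n : ℕ) (hn : 1 < n) :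
    (∀ f : MvPolynomial (Fin 2) F,
        ∃! g : MvPolynomial (Fin 2) F, degreeOf 1 g ≤ n - 2 ∧
          ∃ p : MvPolynomial (Fin 2) F × MvPolynomial (Fin 2) F, f = D2 F n p + g) ∧
    (∀ f : MvPolynomial (Fin 2) F,
        ∃! g : MvPolynomial (Fin 2) F, degreeOf 1 g ≤ n - 2 ∧
          ∃ p : MvPolynomial (Fin 2) F × MvPolynomial (Fin 2) F, f = d2 F n p + g) :=
  stmt19_general F n hn
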